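/- With the notation and hypotheses of the context (including the Grothendieck–Riemann–Roch relation, the twist relation, the grading assumptions, the pair data [D_p] ∈ A^2 with D_{i_1}·D_{i_2} = Σ_{p ∈ P(i_1,i_2)} [D_p] and h^{(2)}_{(i_1,i_2),λ} = Σ_p r_{(i_1,i_2),λ,p}·[D_p], and the rank compatibilities), the degree-2 component of chPar equals c_2 − Σ_{i=1}^{n} Σ_{λ ∈ Σ'_i} α_i(λ)·γ_{i,λ} + (1/2) Σ_{i=1}^{n} Σ_{λ ∈ Σ'_i} α_i(λ)^2 · r_{i,λ} · D_i^2 + Σ_{i_1 < i_2} Σ_{λ_1 ∈ Σ'_{i_1}, λ_2 ∈ Σ'_{i_2}} Σ_{p ∈ P(i_1,i_2)} α_{i_1}(λ_1)·α_{i_2}(λ_2)·r_{(i_1,i_2),(λ_1,λ_2),p}·[D_p]. (This is the formula ch_2^{Par}(E) = ch_2^{Vb}(E) − Σ α·ξ_*(c_1(Gr)) + ½ Σ α²·rank(Gr)·[D_i]² + Σ_{i_1<i_2} Σ α_1 α_2 · rank_p(Gr)·[D_p], agreeing with Mochizuki's and Panov's formulas.) -/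

import Mathlib

open scoped Classical

noncomputable section

variable {A : Type*} [CommRing A] [Algebra ℝ A]

/-- `exp x = Σ_{k ≥ 0} x^k/k!` for a nilpotent element `x`, as a finite sum (the terms with
`k ≥ nilpotencyClass x` vanish). -/
def nexp (x : A) : A :=
  ∑ m ∈ Finset.range (nilpotencyClass x), ((m.factorial : ℝ))⁻¹ • x ^ m

/-- `J(a,b,x) = Σ_{k ≥ 0} (-1)^k ((b^{k+1} - a^{k+1})/(k+1)!) x^k`, the formal value of
`∫_a^b exp (-ρ x) dρ` for a nilpotent element `x` (a finite sum). -/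
def Jf (a b : ℝ) (x : A) : A :=
  ∑ m ∈ Finset.range (nilpotencyClass x),
    ((-1 : ℝ) ^ m * ((b ^ (m + 1) - a ^ (m + 1)) / (m + 1).factorial)) • x ^ m

variable {n : ℕ} {Sig : Fin n → Type*} [∀ i, Fintype (Sig i)] [∀ i, LinearOrder (Sig i)]

/-- `c_σ = c + Σ_{q=1}^n (-1)^q Σ_{I = {i_1<⋯<i_q}} Σ_{λ : σ_{i_j} < λ_{i_j} ∀ j} g_{I,λ}`,
the Chern character of the component sheaf `E_σ` of a locally abelian parabolic bundle,
computed via the Koszul-style resolution.  Here `λ` runs over multi-indices of covers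
(risers) `λ_i` of `Σ_i` for `i ∈ I` with `σ_i ≤ m_-(λ_i)`. -/
def cSigma (c : A) (g : ∀ I : Finset (Fin n), ((i : I) → Sig i.1 × Sig i.1) → A)
    (σ : ∀ i, Sig i) : A :=
  c + ∑ I ∈ Finset.univ.filter (fun I : Finset (Fin n) => I.Nonempty),
        (-1 : A) ^ I.card *
          ∑ lam ∈ Finset.univ.filter
              (fun lam : (i : I) → Sig i.1 × Sig i.1 =>
                ∀ i : I, (lam i).1 ⋖ (lam i).2 ∧ σ i.1 ≤ (lam i).1),
            g I lam

/-- The parabolic Chern character, given by the Iyer–Simpson integral formula evaluated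
formally: `chPar = (∏_i J(0,1,D_i))⁻¹ Σ_{σ} c_σ ∏_i J(α_-(σ_i), α_+(σ_i), D_i)`. -/
def chPar (D : Fin n → A) (αm αp : ∀ i, Sig i → ℝ) (c : A)
    (g : ∀ I : Finset (Fin n), ((i : I) → Sig i.1 × Sig i.1) → A) : A :=
  Ring.inverse (∏ i, Jf 0 1 (D i)) *
    ∑ σ : ∀ i, Sig i, cSigma c g σ * ∏ i, Jf (αm i (σ i)) (αp i (σ i)) (D i)

/-- The multi-index of covers on the singleton `{i}` determined by one cover `p` of `Σ_i`. -/
def lamOfSingle {n : ℕ} {Sig : Fin n → Type*} (i : Fin n) (p : Sig i × Sig i) :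
    (j : ({i} : Finset (Fin n))) → Sig j.1 × Sig j.1 :=
  fun j => (Finset.mem_singleton.mp j.2).symm ▸ p

/-- The multi-index of covers on the pair `{i₁, i₂}` determined by covers `p₁` of `Σ_{i₁}`
and `p₂` of `Σ_{i₂}`. -/
def lamOfPair {n : ℕ} {Sig : Fin n → Type*} (i₁ i₂ : Fin n)
    (p₁ : Sig i₁ × Sig i₁) (p₂ : Sig i₂ × Sig i₂) :
    (j : ({i₁, i₂} : Finset (Fin n))) → Sig j.1 × Sig j.1 :=
  fun j =>
    if h : j.1 = i₁ then h.symm ▸ p₁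
    else
      (by
        have hj := j.2
        simp only [Finset.mem_insert, Finset.mem_singleton] at hj
        exact ((hj.resolve_left h).symm ▸ p₂ : Sig j.1 × Sig j.1))

/-- The multi-index of covers on the triple `{i₁, i₂, i₃}` determined by covers `p₁, p₂, p₃`
of `Σ_{i₁}, Σ_{i₂}, Σ_{i₃}`. -/
def lamOfTriple {n : ℕ} {Sig : Fin n → Type*} (i₁ i₂ i₃ : Fin n)
    (p₁ : Sig i₁ × Sig i₁) (p₂ : Sig i₂ × Sig i₂) (p₃ : Sig i₃ × Sig i₃) :
    (j : ({i₁, i₂, i₃} : Finset (Fin n))) → Sig j.1 × Sig j.1 :=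
  fun j =>
    if h1 : j.1 = i₁ then h1.symm ▸ p₁
    else if h2 : j.1 = i₂ then h2.symm ▸ p₂
    else
      (by
        have hj := j.2
        simp only [Finset.mem_insert, Finset.mem_singleton] at hj
        exact (((hj.resolve_left h1).resolve_left h2).symm ▸ p₃ : Sig j.1 × Sig j.1))

set_option linter.unusedSectionVars false

/-- Products of power series evaluated at a nilpotent element. -/
lemma ev_mul (x : A) (N : ℕ) (hx : x ^ N = 0) (f g : PowerSeries ℝ) :
    (∑ m ∈ Finset.range N, (PowerSeries.coeff m (f * g)) • x ^ m) =
      (∑ m ∈ Finset.range N, (PowerSeries.coeff m f) • x ^ m) *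
      (∑ m ∈ Finset.range N, (PowerSeries.coeff m g) • x ^ m) := by
  have key : ∀ f : PowerSeries ℝ, (∑ m ∈ Finset.range N, (PowerSeries.coeff m f) • x ^ m) =
      Polynomial.aeval x (PowerSeries.trunc N f) := by
    intro f
    rw [Polynomial.aeval_def, PowerSeries.eval₂_trunc_eq_sum_range]
    simp [Algebra.smul_def]
  have hq : ∀ q : Polynomial ℝ, Polynomial.aeval x q =
      Polynomial.aeval x (PowerSeries.trunc N (q : PowerSeries ℝ)) := by
    intro q
    rw [← key, Polynomial.aeval_eq_sum_range' (n := max N (q.natDegree + 1)) (by omega)]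
    symm
    simp only [Polynomial.coeff_coe]
    apply Finset.sum_subset
    · intro a ha
      simp only [Finset.mem_range] at *
      omega
    · intro m _ hm
      have : N ≤ m := by simpa using hm
      rw [pow_eq_zero_of_le this hx, smul_zero]
  rw [key, key, key, ← PowerSeries.trunc_trunc_mul_trunc, ← map_mul,
    hq (PowerSeries.trunc N f * PowerSeries.trunc N g), Polynomial.coe_mul]

lemma nil_pow (x : A) (hx : IsNilpotent x) : x ^ nilpotencyClass x = 0 :=
  pow_nilpotencyClass hx

lemma Jf_add (a b d : ℝ) (x : A) : Jf a b x + Jf b d x = Jf a d x := by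
  unfold Jf
  rw [← Finset.sum_add_distrib]
  refine Finset.sum_congr rfl fun m _ => ?_
  rw [← add_smul]
  congr 1
  ring

lemma nexp_mul_Jf (x : A) (hx : IsNilpotent x) : Jf (-1) 0 x = nexp x * Jf 0 1 x := by
  let J0 : PowerSeries ℝ := PowerSeries.mk fun m =>
    ((-1 : ℝ) ^ m * (((1:ℝ) ^ (m + 1) - 0 ^ (m + 1)) / (m + 1).factorial))
  let J1 : PowerSeries ℝ := PowerSeries.mk fun m =>
    ((-1 : ℝ) ^ m * (((0:ℝ) ^ (m + 1) - (-1) ^ (m + 1)) / (m + 1).factorial))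
  have h0 : PowerSeries.X * J0 = 1 - PowerSeries.evalNegHom (PowerSeries.exp ℝ) := by
    ext m
    cases m with
    | zero =>
      simp only [PowerSeries.evalNegHom, PowerSeries.coeff_zero_X_mul, map_sub,
        PowerSeries.coeff_rescale, PowerSeries.coeff_exp]
      simp
    | succ m =>
      rw [PowerSeries.coeff_succ_X_mul]
      simp [J0, PowerSeries.evalNegHom, PowerSeries.coeff_one, PowerSeries.coeff_exp, pow_succ, div_eq_mul_inv]
  have h1 : PowerSeries.X * J1 = PowerSeries.exp ℝ - 1 := by
    ext m
    cases m with
    | zero => simp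
    | succ m =>
      rw [PowerSeries.coeff_succ_X_mul]
      have : ((-1:ℝ)^m) * (-1)^m = 1 := by rw [← mul_pow]; simp
      simp [J1, PowerSeries.coeff_one, PowerSeries.coeff_exp, pow_succ]
      rw [← mul_div_assoc, this, one_div]
  have h : J1 = PowerSeries.exp ℝ * J0 := by
    apply mul_left_cancel₀ (PowerSeries.X_ne_zero (R := ℝ))
    rw [h1, mul_left_comm, h0, mul_sub, PowerSeries.exp_mul_exp_neg_eq_one, mul_one]
  have := ev_mul x _ (nil_pow x hx) (PowerSeries.exp ℝ) J0
  rw [← h] at this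
  simpa [J1, J0, PowerSeries.coeff_exp, Jf, nexp] using this

lemma nexp_eq (x : A) [Module ℚ A] : nexp x = IsNilpotent.exp x := by
  unfold nexp IsNilpotent.exp
  refine Finset.sum_congr rfl fun m _ => ?_
  have := map_inv_natCast_smul (AddMonoidHom.id A) ℝ ℚ m.factorial (x ^ m)
  simpa using this

lemma nexp_sum {ι : Type*} (s : Finset ι) (D : ι → A) (hD : ∀ i, IsNilpotent (D i)) :
    nexp (∑ i ∈ s, D i) = ∏ i ∈ s, nexp (D i) := by
  let _ : Module ℚ A := Module.compHom A (algebraMap ℚ ℝ)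
  simp only [nexp_eq]
  induction s using Finset.induction_on with
  | empty => simp [IsNilpotent.exp_zero]
  | insert a s ha ih =>
    rw [Finset.sum_insert ha, Finset.prod_insert ha,
      IsNilpotent.exp_add_of_commute (Commute.all _ _) (hD a), ih]
    exact isNilpotent_sum fun i _ => hD i

lemma Jf_isUnit (x : A) (hx : IsNilpotent x) : IsUnit (Jf 0 1 x) := by
  rcases subsingleton_or_nontrivial A with hA | hA
  · exact isUnit_of_subsingleton _
  · have hpos : 0 < nilpotencyClass x := by
      rw [pos_nilpotencyClass_iff]; exact hx
    unfold Jf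
    obtain ⟨k, hk⟩ := Nat.exists_eq_succ_of_ne_zero hpos.ne'
    rw [hk, Finset.sum_range_succ']
    have hn : IsNilpotent (∑ m ∈ Finset.range k, ((-1 : ℝ) ^ (m+1) *
      (((1:ℝ) ^ (m + 1 + 1) - 0 ^ (m + 1 + 1)) / (m + 1 + 1).factorial)) • x ^ (m+1)) := by
      apply isNilpotent_sum
      intro m _
      exact (hx.pow_succ m).smul _
    have := hn.isUnit_add_one
    simpa using this

section graded

variable (𝒜 : ℕ → Submodule ℝ A) [GradedAlgebra 𝒜]

/-- Degree `k` component as a linear map. -/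
def dg (k : ℕ) : A →ₗ[ℝ] A := GradedAlgebra.proj 𝒜 k

lemma dg_def (k : ℕ) (a : A) : dg 𝒜 k a = (DirectSum.decompose 𝒜 a k : A) := rfl

lemma dg_mul (k : ℕ) (a b : A) :
    dg 𝒜 k (a * b) = ∑ ij ∈ Finset.HasAntidiagonal.antidiagonal k, dg 𝒜 ij.1 a * dg 𝒜 ij.2 b := by
  simp only [dg_def, DirectSum.decompose_mul, DirectSum.coe_mul_apply_eq_sum_antidiagonal]

lemma dg_mul0 (a b : A) : dg 𝒜 0 (a * b) = dg 𝒜 0 a * dg 𝒜 0 b := by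
  simp [dg_mul]

lemma dg_mul1 (a b : A) :
    dg 𝒜 1 (a * b) = dg 𝒜 0 a * dg 𝒜 1 b + dg 𝒜 1 a * dg 𝒜 0 b := by
  rw [dg_mul, Finset.Nat.antidiagonal_succ]; simp

lemma dg_mul2 (a b : A) :
    dg 𝒜 2 (a * b) = dg 𝒜 0 a * dg 𝒜 2 b + dg 𝒜 1 a * dg 𝒜 1 b + dg 𝒜 2 a * dg 𝒜 0 b := by
  have h : Finset.HasAntidiagonal.antidiagonal 2 = {(0, 2), (1, 1), (2, 0)} := rfl
  rw [dg_mul, h]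
  simp [add_assoc]

lemma dg_one0 : dg 𝒜 0 1 = 1 := by
  rw [dg_def, DirectSum.decompose_of_mem_same 𝒜 SetLike.GradedOne.one_mem]

lemma dg_one1 : dg 𝒜 1 1 = 0 := by
  rw [dg_def, DirectSum.decompose_of_mem_ne 𝒜 SetLike.GradedOne.one_mem (by norm_num)]

lemma dg_series (k : ℕ) (x : A) (hx : IsNilpotent x) (h1 : x ∈ 𝒜 1) (f : ℕ → ℝ) :
    dg 𝒜 k (∑ m ∈ Finset.range (nilpotencyClass x), f m • x ^ m) = f k • x ^ k := by
  have hm : ∀ m, x ^ m ∈ 𝒜 m := fun m => by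
    simpa using SetLike.pow_mem_graded m h1
  have h : ∀ m, dg 𝒜 k (x ^ m) = if m = k then x ^ m else 0 := by
    intro m
    split_ifs with h
    · subst h; rw [dg_def, DirectSum.decompose_of_mem_same 𝒜 (hm _)]
    · rw [dg_def, DirectSum.decompose_of_mem_ne 𝒜 (hm _) h]
  simp only [map_sum, map_smul, h, smul_ite, smul_zero]
  rw [Finset.sum_ite_eq' (Finset.range (nilpotencyClass x)) k]
  split_ifs with hk
  · rfl
  · rw [pow_eq_zero_of_le (by simpa using hk) (nil_pow x hx), smul_zero]

lemma dg_nexp0 (x : A) (hx : IsNilpotent x) (h1 : x ∈ 𝒜 1) : dg 𝒜 0 (nexp x) = 1 := by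
  unfold nexp; rw [dg_series 𝒜 0 x hx h1 (fun m => ((m.factorial : ℝ))⁻¹)]; simp

lemma dg_nexp1 (x : A) (hx : IsNilpotent x) (h1 : x ∈ 𝒜 1) : dg 𝒜 1 (nexp x) = x := by
  unfold nexp; rw [dg_series 𝒜 1 x hx h1 (fun m => ((m.factorial : ℝ))⁻¹)]; simp

lemma dg_J0 (a : ℝ) (x : A) (hx : IsNilpotent x) (h1 : x ∈ 𝒜 1) :
    dg 𝒜 0 (Jf (-1) a x) = algebraMap ℝ A (1 + a) := by
  unfold Jf
  rw [dg_series 𝒜 0 x hx h1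
    (fun m => ((-1 : ℝ) ^ m * ((a ^ (m + 1) - (-1) ^ (m + 1)) / (m + 1).factorial)))]
  simp [Algebra.smul_def, add_comm]

lemma dg_J1 (a : ℝ) (x : A) (hx : IsNilpotent x) (h1 : x ∈ 𝒜 1) :
    dg 𝒜 1 (Jf (-1) a x) = ((1 - a ^ 2) / 2) • x := by
  unfold Jf
  rw [dg_series 𝒜 1 x hx h1
    (fun m => ((-1 : ℝ) ^ m * ((a ^ (m + 1) - (-1) ^ (m + 1)) / (m + 1).factorial)))]
  rw [pow_one x]
  congr 1
  norm_num [Nat.factorial]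
  ring

lemma dg_prod0 {ι : Type*} (s : Finset ι) (f : ι → A) :
    dg 𝒜 0 (∏ i ∈ s, f i) = ∏ i ∈ s, dg 𝒜 0 (f i) := by
  induction s using Finset.induction_on with
  | empty => simp [dg_one0]
  | insert a s ha ih => rw [Finset.prod_insert ha, Finset.prod_insert ha, dg_mul0, ih]

lemma dg_prod1 {ι : Type*} (s : Finset ι) (f : ι → A) (h : ∀ i ∈ s, dg 𝒜 0 (f i) = 1) :
    dg 𝒜 1 (∏ i ∈ s, f i) = ∑ i ∈ s, dg 𝒜 1 (f i) := by
  induction s using Finset.induction_on with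
  | empty => simp [dg_one1]
  | insert a s ha ih =>
    rw [Finset.prod_insert ha, Finset.sum_insert ha, dg_mul1, dg_prod0,
      ih (fun i hi => h i (Finset.mem_insert_of_mem hi)), h a (Finset.mem_insert_self _ _),
      Finset.prod_eq_one (fun i hi => h i (Finset.mem_insert_of_mem hi))]
    ring

end graded

/-- Telescoping along a finite linear order. -/
lemma tele {S : Type*} [Fintype S] [LinearOrder S] (η : S) (hη : ∀ s, η ≤ s)
    (α : S × S → ℝ) (αp αm : S → ℝ)
    (hαpc : ∀ (σ σ' : S), σ ⋖ σ' → αp σ = α (σ, σ'))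
    (hαmη : αm η = -1)
    (hαmc : ∀ (σ σ' : S), σ ⋖ σ' → αm σ' = α (σ, σ')) (x : A) (m : S) :
    ∑ s ∈ Finset.univ.filter (fun s => s ≤ m), Jf (αm s) (αp s) x = Jf (-1) (αp m) x := by
  induction m using WellFoundedLT.induction with
  | ind m ih =>
    by_cases hm : m = η
    · subst hm
      have : Finset.univ.filter (fun s => s ≤ m) = {m} := by
        ext s
        simp only [Finset.mem_filter, Finset.mem_univ, true_and, Finset.mem_singleton]
        exact ⟨fun h => le_antisymm h (hη s), fun h => h.le⟩
      rw [this, Finset.sum_singleton, hαmη]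
    · have hlt : η < m := lt_of_le_of_ne (hη m) (Ne.symm hm)
      obtain ⟨p, hp, hpm⟩ := exists_le_covBy_of_lt hlt
      have : Finset.univ.filter (fun s => s ≤ m) =
          insert m (Finset.univ.filter (fun s => s ≤ p)) := by
        ext s
        simp only [Finset.mem_filter, Finset.mem_univ, true_and, Finset.mem_insert]
        constructor
        · intro h
          rcases h.eq_or_lt with h | h
          · exact Or.inl h
          · exact Or.inr (hpm.le_of_lt h)
        · rintro (h | h)
          · exact h.le
          · exact h.trans hpm.le
      rw [this, Finset.sum_insert, ih p hpm.lt, hαmc p m hpm, ← hαpc p m hpm, add_comm, Jf_add]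
      simp [hpm.lt]

lemma sum_single {S : Fin n → Type*} [∀ i, Fintype (S i)] [∀ i, LinearOrder (S i)]
    (i : Fin n) (f : ((j : ({i} : Finset (Fin n))) → S j.1 × S j.1) → A) :
    ∑ lam ∈ Finset.univ.filter
      (fun lam : (j : ({i} : Finset (Fin n))) → S j.1 × S j.1 => ∀ j, (lam j).1 ⋖ (lam j).2),
        f lam =
    ∑ p ∈ Finset.univ.filter (fun p : S i × S i => p.1 ⋖ p.2), f (lamOfSingle i p) := by
  symm
  refine Finset.sum_bij' (fun p _ => lamOfSingle i p)
    (fun lam _ => lam ⟨i, Finset.mem_singleton_self i⟩) ?_ ?_ ?_ ?_ ?_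
  · intro p hp
    simp only [Finset.mem_filter, Finset.mem_univ, true_and] at hp ⊢
    rintro ⟨j, hj⟩
    obtain rfl := Finset.mem_singleton.mp hj
    exact hp
  · intro lam hl
    simp only [Finset.mem_filter, Finset.mem_univ, true_and] at hl ⊢
    exact hl _
  · intro p hp
    rfl
  · intro lam hl
    funext ⟨j, hj⟩
    obtain rfl := Finset.mem_singleton.mp hj
    rfl
  · intro p hp
    rfl

lemma lamOfPair_fst {S : Fin n → Type*} (i₁ i₂ : Fin n)
    (p₁ : S i₁ × S i₁) (p₂ : S i₂ × S i₂) (h) : lamOfPair i₁ i₂ p₁ p₂ ⟨i₁, h⟩ = p₁ := by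
  simp [lamOfPair]

lemma lamOfPair_snd {S : Fin n → Type*} (i₁ i₂ : Fin n) (hne : i₁ ≠ i₂)
    (p₁ : S i₁ × S i₁) (p₂ : S i₂ × S i₂) (h) : lamOfPair i₁ i₂ p₁ p₂ ⟨i₂, h⟩ = p₂ := by
  simp [lamOfPair, hne.symm]

lemma sum_pair {S : Fin n → Type*} [∀ i, Fintype (S i)] [∀ i, LinearOrder (S i)]
    (i₁ i₂ : Fin n) (hne : i₁ ≠ i₂)
    (f : ((j : ({i₁, i₂} : Finset (Fin n))) → S j.1 × S j.1) → A) :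
    ∑ lam ∈ Finset.univ.filter
      (fun lam : (j : ({i₁, i₂} : Finset (Fin n))) → S j.1 × S j.1 => ∀ j, (lam j).1 ⋖ (lam j).2),
        f lam =
    ∑ p₁ ∈ Finset.univ.filter (fun p : S i₁ × S i₁ => p.1 ⋖ p.2),
      ∑ p₂ ∈ Finset.univ.filter (fun p : S i₂ × S i₂ => p.1 ⋖ p.2),
        f (lamOfPair i₁ i₂ p₁ p₂) := by
  have m1 : i₁ ∈ ({i₁, i₂} : Finset (Fin n)) := by simp
  have m2 : i₂ ∈ ({i₁, i₂} : Finset (Fin n)) := by simp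
  rw [← Finset.sum_product']
  symm
  refine Finset.sum_bij' (fun p _ => lamOfPair i₁ i₂ p.1 p.2)
    (fun lam _ => (lam ⟨i₁, m1⟩, lam ⟨i₂, m2⟩)) ?_ ?_ ?_ ?_ ?_
  · intro p hp
    simp only [Finset.mem_product, Finset.mem_filter, Finset.mem_univ, true_and] at hp ⊢
    rintro ⟨j, hj⟩
    have hj' := hj
    simp only [Finset.mem_insert, Finset.mem_singleton] at hj'
    rcases hj' with rfl | rfl
    · rw [lamOfPair_fst]; exact hp.1
    · rw [lamOfPair_snd _ _ hne]; exact hp.2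
  · intro lam hl
    simp only [Finset.mem_product, Finset.mem_filter, Finset.mem_univ, true_and] at hl ⊢
    exact ⟨hl _, hl _⟩
  · intro p hp
    simp only [lamOfPair_fst, lamOfPair_snd _ _ hne]
  · intro lam hl
    funext ⟨j, hj⟩
    have hj' := hj
    simp only [Finset.mem_insert, Finset.mem_singleton] at hj'
    rcases hj' with rfl | rfl
    · rw [lamOfPair_fst]
    · rw [lamOfPair_snd _ _ hne]
  · intro p hp
    rfl

/-- Only subsets of cardinality one and two contribute. -/
lemma sum_card12 (F : Finset (Fin n) → A) (hF : ∀ I, 2 < I.card → F I = 0) :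
    ∑ I ∈ Finset.univ.filter (fun I : Finset (Fin n) => I.Nonempty), F I =
      ∑ i, F {i} + ∑ i₁, ∑ i₂ ∈ Finset.univ.filter (fun i₂ => i₁ < i₂), F {i₁, i₂} := by
  have e1 : ∑ i, F {i} = ∑ I ∈ Finset.univ.filter (fun I : Finset (Fin n) => I.card = 1), F I := by
    refine Finset.sum_bij (fun i _ => {i}) ?_ ?_ ?_ ?_
    · intro i _; simp
    · intro i _ j _ h; simpa using h
    · intro I hI
      simp only [Finset.mem_filter, Finset.mem_univ, true_and] at hI
      obtain ⟨a, rfl⟩ := Finset.card_eq_one.mp hI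
      exact ⟨a, Finset.mem_univ _, rfl⟩
    · intro i _; rfl
  have e2 : ∑ i₁, ∑ i₂ ∈ Finset.univ.filter (fun i₂ => i₁ < i₂), F {i₁, i₂} =
      ∑ I ∈ Finset.univ.filter (fun I : Finset (Fin n) => I.card = 2), F I := by
    rw [Finset.sum_sigma']
    refine Finset.sum_bij (fun q _ => {q.1, q.2}) ?_ ?_ ?_ ?_
    · rintro ⟨i, j⟩ h
      simp only [Finset.mem_sigma, Finset.mem_filter, Finset.mem_univ, true_and] at h ⊢
      exact Finset.card_pair h.ne
    · rintro ⟨i, j⟩ h ⟨k, l⟩ h' e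
      simp only [Finset.mem_sigma, Finset.mem_filter, Finset.mem_univ, true_and] at h h' e
      have a1 : i ∈ ({k, l} : Finset (Fin n)) := by rw [← e]; simp
      have a2 : j ∈ ({k, l} : Finset (Fin n)) := by rw [← e]; simp
      have a3 : k ∈ ({i, j} : Finset (Fin n)) := by rw [e]; simp
      simp only [Finset.mem_insert, Finset.mem_singleton] at a1 a2 a3
      have : i = k ∧ j = l := by omega
      obtain ⟨rfl, rfl⟩ := this
      rfl
    · intro I hI
      simp only [Finset.mem_filter, Finset.mem_univ, true_and] at hI
      obtain ⟨a, b, hab, rfl⟩ := Finset.card_eq_two.mp hI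
      rcases lt_or_gt_of_ne hab with h | h
      · exact ⟨⟨a, b⟩, by simpa using h, rfl⟩
      · exact ⟨⟨b, a⟩, by simpa using h, Finset.pair_comm _ _⟩
    · intro q _; rfl
  rw [e1, e2, ← Finset.sum_union]
  · symm
    apply Finset.sum_subset
    · intro I hI
      simp only [Finset.mem_union, Finset.mem_filter, Finset.mem_univ, true_and] at hI ⊢
      exact Finset.card_pos.mp (by omega)
    · intro I hI hI'
      simp only [Finset.mem_union, Finset.mem_filter, Finset.mem_univ, true_and] at hI hI'
      have := Finset.card_pos.mpr hI
      exact hF I (by omega)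
  · rw [Finset.disjoint_left]
    intro I hI hI'
    simp only [Finset.mem_filter, Finset.mem_univ, true_and] at hI hI'
    omega

/-- Extension by zero of the weights of a multi-index. -/
def wext (α : ∀ i, Sig i × Sig i → ℝ) (I : Finset (Fin n)) (lam : (i : I) → Sig i.1 × Sig i.1)
    (i : Fin n) : ℝ := if h : i ∈ I then α i (lam ⟨i, h⟩) else 0

/-- The factor at `i`. -/
def Wf (D : Fin n → A) (I : Finset (Fin n)) (a : Fin n → ℝ) (i : Fin n) : A :=
  if i ∈ I then Jf (-1) (a i) (D i) else nexp (D i)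

lemma chPar_exact
    (D : Fin n → A) (hD : ∀ i, IsNilpotent (D i))
    (η τ : ∀ i, Sig i) (hη : ∀ i σ, η i ≤ σ) (hτ : ∀ i σ, σ ≤ τ i)
    (α : ∀ i, Sig i × Sig i → ℝ)
    (αp αm : ∀ i, Sig i → ℝ)
    (hαpτ : ∀ i, αp i (τ i) = 0)
    (hαpc : ∀ i (σ σ' : Sig i), σ ⋖ σ' → αp i σ = α i (σ, σ'))
    (hαmη : ∀ i, αm i (η i) = -1)
    (hαmc : ∀ i (σ σ' : Sig i), σ ⋖ σ' → αm i σ' = α i (σ, σ'))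
    (c : A)
    (g hh : ∀ I : Finset (Fin n), ((i : I) → Sig i.1 × Sig i.1) → A)
    (hGRR : ∀ (I : Finset (Fin n)), I.Nonempty →
        ∀ lam : (i : I) → Sig i.1 × Sig i.1, (∀ i : I, (lam i).1 ⋖ (lam i).2) →
          g I lam = (∏ i : I, Jf 0 1 (D i.1)) * hh I lam)
    (htwist : cSigma c g (fun i => η i) * nexp (∑ i, D i) = c) :
    chPar D αm αp c g = c +
      ∑ I ∈ Finset.univ.filter (fun I : Finset (Fin n) => I.Nonempty),
        (-1 : A) ^ I.card *
          ∑ lam ∈ Finset.univ.filter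
              (fun lam : (i : I) → Sig i.1 × Sig i.1 => ∀ i : I, (lam i).1 ⋖ (lam i).2),
            hh I lam * (∏ i, Wf D I (wext α I lam) i - ∏ i, Wf D I (fun _ => 0) i) := by
  set T := ∏ i, Jf 0 1 (D i) with hT
  set E := ∏ i, nexp (D i) with hE
  have hTu : IsUnit T := by
    exact Finset.prod_induction _ IsUnit (fun a b => IsUnit.mul) isUnit_one
      (fun i _ => Jf_isUnit _ (hD i))
  have htele : ∀ i m, ∑ s ∈ Finset.univ.filter (fun s => s ≤ m),
      Jf (αm i s) (αp i s) (D i) = Jf (-1) (αp i m) (D i) := fun i m =>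
    tele (η i) (hη i) (α i) (αp i) (αm i) (hαpc i) (hαmη i) (hαmc i) (D i) m
  have htele' : ∀ i, ∑ s, Jf (αm i s) (αp i s) (D i) = Jf (-1) 0 (D i) := by
    intro i
    rw [← hαpτ i, ← htele i (τ i), Finset.filter_true_of_mem (fun s _ => hτ i s)]
  have hprodI : ∀ (I : Finset (Fin n)) (f : Fin n → A),
      ∏ i : I, f i.1 = ∏ i, if i ∈ I then f i else 1 := by
    intro I f
    rw [Finset.prod_coe_sort I f, Finset.prod_ite_mem, Finset.univ_inter]
  -- the sum over `σ` below a given multi-index of covers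
  have hsig : ∀ (I : Finset (Fin n)) (lam : (i : I) → Sig i.1 × Sig i.1),
      (∀ i : I, (lam i).1 ⋖ (lam i).2) →
      (∏ i : I, Jf 0 1 (D i.1)) *
      ∑ σ ∈ Finset.univ.filter (fun σ : ∀ i, Sig i => ∀ i : I, σ i.1 ≤ (lam i).1),
        ∏ i, Jf (αm i (σ i)) (αp i (σ i)) (D i) = T * ∏ i, Wf D I (wext α I lam) i := by
    intro I lam hl
    let t : ∀ i, Finset (Sig i) := fun i =>
      if h : i ∈ I then Finset.univ.filter (fun s => s ≤ (lam ⟨i, h⟩).1) else Finset.univ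
    have ht : Finset.univ.filter (fun σ : ∀ i, Sig i => ∀ i : I, σ i.1 ≤ (lam i).1) =
        Fintype.piFinset t := by
      ext σ
      simp only [Finset.mem_filter, Finset.mem_univ, true_and, Fintype.mem_piFinset]
      constructor
      · intro h i
        by_cases hi : i ∈ I
        · simpa [t, hi] using h ⟨i, hi⟩
        · simp [t, hi]
      · rintro h ⟨i, hi⟩
        simpa [t, hi] using h i
    rw [ht, ← Finset.prod_univ_sum t (fun i s => Jf (αm i s) (αp i s) (D i)),
      hprodI I (fun i => Jf 0 1 (D i)), hT, ← Finset.prod_mul_distrib, ← Finset.prod_mul_distrib]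
    refine Finset.prod_congr rfl fun i _ => ?_
    by_cases hi : i ∈ I
    · simp only [hi, if_true, t, dif_pos, Wf, wext]
      rw [htele, hαpc i _ _ (hl ⟨i, hi⟩)]
    · simp only [hi, if_false, t, dif_neg, not_false_eq_true, Wf]
      rw [htele', nexp_mul_Jf _ (hD i)]
      ring
  have hE' : nexp (∑ i, D i) = E := nexp_sum _ _ hD
  have hall : ∑ σ : ∀ i, Sig i, ∏ i, Jf (αm i (σ i)) (αp i (σ i)) (D i) = T * E := by
    have := Finset.prod_univ_sum (fun i => (Finset.univ : Finset (Sig i)))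
      (fun i s => Jf (αm i s) (αp i s) (D i))
    rw [Fintype.piFinset_univ] at this
    rw [← this, hT, hE, ← Finset.prod_mul_distrib]
    refine Finset.prod_congr rfl fun i _ => ?_
    rw [htele', nexp_mul_Jf _ (hD i), mul_comm]
  have hgE : ∀ (I : Finset (Fin n)), I.Nonempty → ∀ lam : (i : I) → Sig i.1 × Sig i.1,
      (∀ i : I, (lam i).1 ⋖ (lam i).2) →
      g I lam * E = hh I lam * ∏ i, Wf D I (fun _ => 0) i := by
    intro I hI lam hl
    rw [hGRR I hI lam hl, mul_comm _ (hh I lam), mul_assoc, hprodI I (fun i => Jf 0 1 (D i)), hE,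
      ← Finset.prod_mul_distrib]
    congr 1
    refine Finset.prod_congr rfl fun i _ => ?_
    by_cases hi : i ∈ I
    · simp only [hi, if_true, Wf]
      rw [nexp_mul_Jf _ (hD i), mul_comm]
    · simp [hi, Wf]
  -- the twist relation
  have htw : c * E + ∑ I ∈ Finset.univ.filter (fun I : Finset (Fin n) => I.Nonempty),
        (-1 : A) ^ I.card *
          ∑ lam ∈ Finset.univ.filter
              (fun lam : (i : I) → Sig i.1 × Sig i.1 => ∀ i : I, (lam i).1 ⋖ (lam i).2),
            hh I lam * ∏ i, Wf D I (fun _ => 0) i = c := by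
    rw [hE'] at htwist
    conv_rhs => rw [← htwist]
    unfold cSigma
    rw [add_mul, Finset.sum_mul]
    congr 1
    refine Finset.sum_congr rfl fun I hI => ?_
    simp only [Finset.mem_filter, Finset.mem_univ, true_and] at hI
    rw [mul_assoc, Finset.sum_mul]
    congr 1
    refine Finset.sum_congr ?_ fun lam hl => ?_
    · ext lam
      simp [hη]
    · simp only [Finset.mem_filter, Finset.mem_univ, true_and] at hl
      rw [hgE I hI lam (fun i => (hl i).1)]
  have hS : ∑ σ : ∀ i, Sig i, cSigma c g σ * ∏ i, Jf (αm i (σ i)) (αp i (σ i)) (D i) =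
      T * (c * E + ∑ I ∈ Finset.univ.filter (fun I : Finset (Fin n) => I.Nonempty),
        (-1 : A) ^ I.card *
          ∑ lam ∈ Finset.univ.filter
              (fun lam : (i : I) → Sig i.1 × Sig i.1 => ∀ i : I, (lam i).1 ⋖ (lam i).2),
            hh I lam * ∏ i, Wf D I (wext α I lam) i) := by
    unfold cSigma
    simp only [add_mul, Finset.sum_add_distrib, Finset.sum_mul]
    rw [← Finset.mul_sum, hall, mul_add, mul_left_comm, Finset.mul_sum, Finset.sum_comm]
    congr 1
    refine Finset.sum_congr rfl fun I hI => ?_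
    simp only [Finset.mem_filter, Finset.mem_univ, true_and] at hI
    simp only [mul_assoc]
    rw [← Finset.mul_sum, mul_left_comm]
    congr 1
    simp only [Finset.sum_mul, Finset.mul_sum]
    have : ∀ σ : ∀ i, Sig i, Finset.univ.filter
              (fun lam : (i : I) → Sig i.1 × Sig i.1 =>
                ∀ i : I, (lam i).1 ⋖ (lam i).2 ∧ σ i.1 ≤ (lam i).1) =
        (Finset.univ.filter
              (fun lam : (i : I) → Sig i.1 × Sig i.1 => ∀ i : I, (lam i).1 ⋖ (lam i).2)).filter
          (fun lam => ∀ i : I, σ i.1 ≤ (lam i).1) := by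
      intro σ
      ext lam
      simp [forall_and]
    simp only [this]
    simp only [Finset.sum_filter (p := fun lam : (i : I) → Sig i.1 × Sig i.1 => ∀ i : I, _ ≤ _)]
    rw [Finset.sum_comm]
    refine Finset.sum_congr rfl fun lam hl => ?_
    simp only [Finset.mem_filter, Finset.mem_univ, true_and] at hl
    rw [← Finset.sum_filter, ← Finset.mul_sum, hGRR I hI lam hl, mul_left_comm, ← hsig I lam hl]
    ring
  unfold chPar
  rw [hS, ← hT, Ring.inverse_mul_cancel_left _ _ hTu]
  simp only [mul_sub, Finset.sum_sub_distrib]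
  linear_combination htw

lemma sum_offdiag (f : Fin n → Fin n → A) :
    ∑ i, ∑ j ∈ Finset.univ.erase i, f i j =
      ∑ i, ∑ j ∈ Finset.univ.filter (fun j => i < j), (f i j + f j i) := by
  have h : ∀ i, ∑ j ∈ Finset.univ.erase i, f i j =
      ∑ j ∈ Finset.univ.filter (fun j => i < j), f i j +
      ∑ j ∈ Finset.univ.filter (fun j => j < i), f i j := by
    intro i
    rw [← Finset.sum_union]
    · refine Finset.sum_congr ?_ fun _ _ => rfl
      ext j
      simp only [Finset.mem_erase, Finset.mem_univ, Finset.mem_union, Finset.mem_filter, true_and,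
        and_true]
      omega
    · rw [Finset.disjoint_left]
      intro j hj hj'
      simp only [Finset.mem_filter, Finset.mem_univ, true_and] at hj hj'
      omega
  simp only [h, Finset.sum_add_distrib]
  congr 1
  simp only [Finset.sum_filter]
  rw [Finset.sum_comm]

section graded2

variable (𝒜 : ℕ → Submodule ℝ A) [GradedAlgebra 𝒜]

lemma dg_sign (k m : ℕ) (x : A) : dg 𝒜 m ((-1 : A) ^ k * x) = (-1 : A) ^ k * dg 𝒜 m x := by
  rcases neg_one_pow_eq_or A k with h | h <;> simp [h]

lemma dg_W0 (D : Fin n → A) (hD : ∀ i, IsNilpotent (D i)) (hD1 : ∀ i, D i ∈ 𝒜 1)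
    (I : Finset (Fin n)) (a : Fin n → ℝ) :
    dg 𝒜 0 (∏ i, Wf D I a i) = algebraMap ℝ A (∏ i ∈ I, (1 + a i)) := by
  rw [dg_prod0, map_prod]
  have : ∀ i, dg 𝒜 0 (Wf D I a i) = if i ∈ I then algebraMap ℝ A (1 + a i) else 1 := by
    intro i
    unfold Wf
    split_ifs with h
    · exact dg_J0 𝒜 _ _ (hD i) (hD1 i)
    · exact dg_nexp0 𝒜 _ (hD i) (hD1 i)
  simp only [this]
  rw [Finset.prod_ite_mem, Finset.univ_inter]

lemma dg_W1 (D : Fin n → A) (hD : ∀ i, IsNilpotent (D i)) (hD1 : ∀ i, D i ∈ 𝒜 1)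
    (i : Fin n) (a : Fin n → ℝ) :
    dg 𝒜 1 (∏ j, Wf D {i} a j) =
      algebraMap ℝ A (1 + a i) * ∑ j ∈ Finset.univ.erase i, D j +
        algebraMap ℝ A ((1 - a i ^ 2) / 2) * D i := by
  have h1 : ∀ j ∈ Finset.univ.erase i, Wf D {i} a j = nexp (D j) := by
    intro j hj
    have : j ≠ i := Finset.ne_of_mem_erase hj
    simp [Wf, this]
  have h2 : Wf D {i} a i = Jf (-1) (a i) (D i) := by simp [Wf]
  rw [← Finset.mul_prod_erase _ _ (Finset.mem_univ i), Finset.prod_congr rfl h1, h2, dg_mul1,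
    dg_J0 𝒜 _ _ (hD i) (hD1 i), dg_J1 𝒜 _ _ (hD i) (hD1 i), dg_prod0,
    dg_prod1 𝒜 _ _ (fun j _ => dg_nexp0 𝒜 _ (hD j) (hD1 j)),
    Finset.prod_eq_one (fun j _ => dg_nexp0 𝒜 _ (hD j) (hD1 j)),
    Finset.sum_congr rfl (fun j _ => dg_nexp1 𝒜 _ (hD j) (hD1 j)), mul_one, Algebra.smul_def]

end graded2

/-- Degree `2` part of the parabolic Chern character:
`ch_2^{Par}(E) = ch_2^{Vb}(E) - Σ_i Σ_λ α_i(λ) ξ_*(c_1(Gr^i_λ))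
  + ½ Σ_i Σ_λ α_i(λ)² rank(Gr^i_λ) [D_i]²
  + Σ_{i₁<i₂} Σ_{λ₁,λ₂} Σ_{p} α_{i₁}(λ₁) α_{i₂}(λ₂) rank_p(Gr^{i₁,i₂}_{λ₁,λ₂}) [D_p]`,
agreeing with Mochizuki's and Panov's formulas. -/
theorem chPar_deg2
    {A : Type*} [CommRing A] [Algebra ℝ A]
    {n : ℕ} (hn : 1 ≤ n)
    {Sig : Fin n → Type*} [∀ i, Fintype (Sig i)] [∀ i, LinearOrder (Sig i)]
    [∀ i, Nontrivial (Sig i)]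
    (D : Fin n → A) (hD : ∀ i, IsNilpotent (D i))
    (η τ : ∀ i, Sig i) (hη : ∀ i σ, η i ≤ σ) (hτ : ∀ i σ, σ ≤ τ i)
    (α : ∀ i, Sig i × Sig i → ℝ)
    (hα : ∀ i p, p.1 ⋖ p.2 → α i p ∈ Set.Ioc (-1 : ℝ) 0)
    (hαmono : ∀ i (p p' : Sig i × Sig i),
        p.1 ⋖ p.2 → p'.1 ⋖ p'.2 → p.1 ≤ p'.1 → α i p ≤ α i p')
    (αp αm : ∀ i, Sig i → ℝ)
    (hαpτ : ∀ i, αp i (τ i) = 0)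
    (hαpc : ∀ i (σ σ' : Sig i), σ ⋖ σ' → αp i σ = α i (σ, σ'))
    (hαmη : ∀ i, αm i (η i) = -1)
    (hαmc : ∀ i (σ σ' : Sig i), σ ⋖ σ' → αm i σ' = α i (σ, σ'))
    (c : A)
    (g hh : ∀ I : Finset (Fin n), ((i : I) → Sig i.1 × Sig i.1) → A)
    (hGRR : ∀ (I : Finset (Fin n)), I.Nonempty →
        ∀ lam : (i : I) → Sig i.1 × Sig i.1, (∀ i : I, (lam i).1 ⋖ (lam i).2) →
          g I lam = (∏ i : I, Jf 0 1 (D i.1)) * hh I lam)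
    (htwist : cSigma c g (fun i => η i) * nexp (∑ i, D i) = c)
    (𝒜 : ℕ → Submodule ℝ A) [GradedAlgebra 𝒜]
    (hD1 : ∀ i, D i ∈ 𝒜 1)
    (hhlow : ∀ (I : Finset (Fin n)) (lam : (i : I) → Sig i.1 × Sig i.1),
        (∀ i : I, (lam i).1 ⋖ (lam i).2) → ∀ m, m < I.card →
          (DirectSum.decompose 𝒜 (hh I lam) m : A) = 0)
    (r : ∀ i, Sig i × Sig i → ℚ)
    (hr0 : ∀ i (p : Sig i × Sig i), p.1 ⋖ p.2 → 0 ≤ r i p)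
    (hr1 : ∀ i (p : Sig i × Sig i), p.1 ⋖ p.2 →
        (DirectSum.decompose 𝒜 (hh {i} (lamOfSingle i p)) 1 : A) = (r i p : ℝ) • D i)
    (P : Fin n → Fin n → Type) [∀ i j, Fintype (P i j)]
    (Dp : ∀ i₁ i₂, P i₁ i₂ → A)
    (hDp2 : ∀ i₁ i₂, i₁ < i₂ → ∀ p, Dp i₁ i₂ p ∈ 𝒜 2)
    (hDprod : ∀ i₁ i₂, i₁ < i₂ → D i₁ * D i₂ = ∑ p : P i₁ i₂, Dp i₁ i₂ p)
    (rp : ∀ i₁ i₂, (Sig i₁ × Sig i₁) → (Sig i₂ × Sig i₂) → P i₁ i₂ → ℚ)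
    (hrp0 : ∀ i₁ i₂, i₁ < i₂ → ∀ (p₁ : Sig i₁ × Sig i₁) (p₂ : Sig i₂ × Sig i₂)
        (p : P i₁ i₂), p₁.1 ⋖ p₁.2 → p₂.1 ⋖ p₂.2 → 0 ≤ rp i₁ i₂ p₁ p₂ p)
    (hrp2 : ∀ i₁ i₂, i₁ < i₂ → ∀ (p₁ : Sig i₁ × Sig i₁) (p₂ : Sig i₂ × Sig i₂),
        p₁.1 ⋖ p₁.2 → p₂.1 ⋖ p₂.2 →
          (DirectSum.decompose 𝒜 (hh {i₁, i₂} (lamOfPair i₁ i₂ p₁ p₂)) 2 : A) =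
            ∑ p : P i₁ i₂, (rp i₁ i₂ p₁ p₂ p : ℝ) • Dp i₁ i₂ p)
    (hcompat₁ : ∀ i₁ i₂, i₁ < i₂ → ∀ (p : P i₁ i₂) (p₁ : Sig i₁ × Sig i₁), p₁.1 ⋖ p₁.2 →
        ∑ p₂ ∈ Finset.univ.filter (fun p₂ : Sig i₂ × Sig i₂ => p₂.1 ⋖ p₂.2),
          rp i₁ i₂ p₁ p₂ p = r i₁ p₁)
    (hcompat₂ : ∀ i₁ i₂, i₁ < i₂ → ∀ (p : P i₁ i₂) (p₂ : Sig i₂ × Sig i₂), p₂.1 ⋖ p₂.2 →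
        ∑ p₁ ∈ Finset.univ.filter (fun p₁ : Sig i₁ × Sig i₁ => p₁.1 ⋖ p₁.2),
          rp i₁ i₂ p₁ p₂ p = r i₂ p₂) :
    (DirectSum.decompose 𝒜 (chPar D αm αp c g) 2 : A) =
      (DirectSum.decompose 𝒜 c 2 : A) -
        (∑ i, ∑ p ∈ Finset.univ.filter (fun p : Sig i × Sig i => p.1 ⋖ p.2),
          α i p • (DirectSum.decompose 𝒜 (hh {i} (lamOfSingle i p)) 2 : A)) +
        (∑ i, ∑ p ∈ Finset.univ.filter (fun p : Sig i × Sig i => p.1 ⋖ p.2),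
          ((1 : ℝ) / 2 * α i p ^ 2 * (r i p : ℝ)) • (D i ^ 2)) +
        ∑ i₁, ∑ i₂ ∈ Finset.univ.filter (fun i₂ => i₁ < i₂),
          ∑ p₁ ∈ Finset.univ.filter (fun p₁ : Sig i₁ × Sig i₁ => p₁.1 ⋖ p₁.2),
            ∑ p₂ ∈ Finset.univ.filter (fun p₂ : Sig i₂ × Sig i₂ => p₂.1 ⋖ p₂.2),
              ∑ p : P i₁ i₂,
                (α i₁ p₁ * α i₂ p₂ * (rp i₁ i₂ p₁ p₂ p : ℝ)) • Dp i₁ i₂ p := by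

  have hlow : ∀ (I : Finset (Fin n)) (lam : (i : I) → Sig i.1 × Sig i.1),
        (∀ i : I, (lam i).1 ⋖ (lam i).2) → ∀ m, m < I.card → dg 𝒜 m (hh I lam) = 0 := hhlow
  simp only [← dg_def] at hr1 hrp2 ⊢
  rw [chPar_exact D hD η τ hη hτ α αp αm hαpτ hαpc hαmη hαmc c g hh hGRR htwist, map_add, map_sum]
  simp only [dg_sign, map_sum]
  rw [sum_card12]
  swap
  · intro I hI
    rw [Finset.sum_eq_zero, mul_zero]
    intro lam hl
    simp only [Finset.mem_filter, Finset.mem_univ, true_and] at hl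
    rw [dg_mul2, hlow I lam hl 0 (by omega), hlow I lam hl 1 (by omega), hlow I lam hl 2 hI]
    ring
  -- the weighted ranks
  set S : Fin n → ℝ := fun i =>
    ∑ p ∈ Finset.univ.filter (fun p : Sig i × Sig i => p.1 ⋖ p.2), α i p * (r i p : ℝ) with hS
  have hcov1 : ∀ i (p : Sig i × Sig i), p.1 ⋖ p.2 →
      ∀ j : ({i} : Finset (Fin n)), (lamOfSingle i p j).1 ⋖ (lamOfSingle i p j).2 := by
    rintro i p hp ⟨j, hj⟩
    obtain rfl := Finset.mem_singleton.mp hj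
    exact hp
  have hcov2 : ∀ i₁ i₂, i₁ < i₂ → ∀ (p₁ : Sig i₁ × Sig i₁) (p₂ : Sig i₂ × Sig i₂),
      p₁.1 ⋖ p₁.2 → p₂.1 ⋖ p₂.2 → ∀ j : ({i₁, i₂} : Finset (Fin n)),
        (lamOfPair i₁ i₂ p₁ p₂ j).1 ⋖ (lamOfPair i₁ i₂ p₁ p₂ j).2 := by
    rintro i₁ i₂ hlt p₁ p₂ h₁ h₂ ⟨j, hj⟩
    have hj' := hj
    simp only [Finset.mem_insert, Finset.mem_singleton] at hj'
    rcases hj' with rfl | rfl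
    · rw [lamOfPair_fst]; exact h₁
    · rw [lamOfPair_snd _ _ hlt.ne]; exact h₂
  have hone : ∀ i : Fin n, (-1 : A) ^ ({i} : Finset (Fin n)).card *
      ∑ lam ∈ Finset.univ.filter (fun lam : (j : ({i} : Finset (Fin n))) → Sig j.1 × Sig j.1 =>
          ∀ j, (lam j).1 ⋖ (lam j).2),
        dg 𝒜 2 (hh {i} lam * (∏ j, Wf D {i} (wext α {i} lam) j - ∏ j, Wf D {i} (fun _ => 0) j)) =
      -(∑ p ∈ Finset.univ.filter (fun p : Sig i × Sig i => p.1 ⋖ p.2),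
          α i p • dg 𝒜 2 (hh {i} (lamOfSingle i p))) +
        (∑ p ∈ Finset.univ.filter (fun p : Sig i × Sig i => p.1 ⋖ p.2),
          ((1 : ℝ) / 2 * α i p ^ 2 * (r i p : ℝ)) • (D i ^ 2)) -
        ∑ j ∈ Finset.univ.erase i, S i • (D i * D j) := by
    intro i
    rw [sum_single, ← Finset.smul_sum, ← Finset.mul_sum, hS, Finset.sum_smul,
      Finset.card_singleton, pow_one, neg_one_mul, ← Finset.sum_neg_distrib,
      ← Finset.sum_neg_distrib, ← Finset.sum_add_distrib, ← Finset.sum_sub_distrib]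
    refine Finset.sum_congr rfl fun p hp => ?_
    simp only [Finset.mem_filter, Finset.mem_univ, true_and] at hp
    have hw : wext α {i} (lamOfSingle i p) i = α i p := by
      simp [wext, lamOfSingle]
    rw [dg_mul2, hlow {i} _ (hcov1 i p hp) 0 (by simp), hr1 i p hp, map_sub, map_sub, map_sub,
      dg_W0 𝒜 D hD hD1, dg_W0 𝒜 D hD hD1, dg_W1 𝒜 D hD hD1, dg_W1 𝒜 D hD hD1,
      Finset.prod_singleton, Finset.prod_singleton, hw]
    have e : algebraMap ℝ A ((1 - α i p ^ 2) / 2) =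
        algebraMap ℝ A ((1 - 0 ^ 2) / 2) - algebraMap ℝ A ((1:ℝ)/2) * algebraMap ℝ A (α i p) ^ 2 := by
      rw [← map_pow, ← map_mul, ← map_sub]
      congr 1
      ring
    rw [e]
    simp only [Algebra.smul_def, map_mul, map_pow, map_add, map_one, map_zero]
    ring
  have htwo : ∀ i₁ i₂ : Fin n, i₁ < i₂ → (-1 : A) ^ ({i₁, i₂} : Finset (Fin n)).card *
      ∑ lam ∈ Finset.univ.filter
          (fun lam : (j : ({i₁, i₂} : Finset (Fin n))) → Sig j.1 × Sig j.1 =>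
          ∀ j, (lam j).1 ⋖ (lam j).2),
        dg 𝒜 2 (hh {i₁, i₂} lam * (∏ j, Wf D {i₁, i₂} (wext α {i₁, i₂} lam) j -
          ∏ j, Wf D {i₁, i₂} (fun _ => 0) j)) =
      (∑ p₁ ∈ Finset.univ.filter (fun p₁ : Sig i₁ × Sig i₁ => p₁.1 ⋖ p₁.2),
            ∑ p₂ ∈ Finset.univ.filter (fun p₂ : Sig i₂ × Sig i₂ => p₂.1 ⋖ p₂.2),
              ∑ p : P i₁ i₂,
                (α i₁ p₁ * α i₂ p₂ * (rp i₁ i₂ p₁ p₂ p : ℝ)) • Dp i₁ i₂ p) +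
      (S i₁ • (D i₁ * D i₂) + S i₂ • (D i₂ * D i₁)) := by
    intro i₁ i₂ hlt
    have hA1 : S i₁ • (D i₁ * D i₂) =
        ∑ p₁ ∈ Finset.univ.filter (fun p₁ : Sig i₁ × Sig i₁ => p₁.1 ⋖ p₁.2),
            ∑ p₂ ∈ Finset.univ.filter (fun p₂ : Sig i₂ × Sig i₂ => p₂.1 ⋖ p₂.2),
              ∑ p : P i₁ i₂, (α i₁ p₁ * (rp i₁ i₂ p₁ p₂ p : ℝ)) • Dp i₁ i₂ p := by
      rw [hDprod i₁ i₂ hlt, hS, Finset.sum_smul]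
      refine Finset.sum_congr rfl fun p₁ hp₁ => ?_
      simp only [Finset.mem_filter, Finset.mem_univ, true_and] at hp₁
      rw [Finset.sum_comm, Finset.smul_sum]
      refine Finset.sum_congr rfl fun p _ => ?_
      rw [← Finset.sum_smul, ← Finset.mul_sum, ← hcompat₁ i₁ i₂ hlt p p₁ hp₁]
      push_cast
      rfl
    have hA2 : S i₂ • (D i₂ * D i₁) =
        ∑ p₁ ∈ Finset.univ.filter (fun p₁ : Sig i₁ × Sig i₁ => p₁.1 ⋖ p₁.2),
            ∑ p₂ ∈ Finset.univ.filter (fun p₂ : Sig i₂ × Sig i₂ => p₂.1 ⋖ p₂.2),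
              ∑ p : P i₁ i₂, (α i₂ p₂ * (rp i₁ i₂ p₁ p₂ p : ℝ)) • Dp i₁ i₂ p := by
      rw [mul_comm, hDprod i₁ i₂ hlt, hS, Finset.sum_smul, Finset.sum_comm]
      refine Finset.sum_congr rfl fun p₂ hp₂ => ?_
      simp only [Finset.mem_filter, Finset.mem_univ, true_and] at hp₂
      rw [Finset.sum_comm, Finset.smul_sum]
      refine Finset.sum_congr rfl fun p _ => ?_
      rw [← Finset.sum_smul, ← Finset.mul_sum, ← hcompat₂ i₁ i₂ hlt p p₂ hp₂]
      push_cast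
      rfl
    rw [hA1, hA2, sum_pair _ _ hlt.ne, Finset.card_pair hlt.ne, neg_one_sq, one_mul]
    simp only [← Finset.sum_add_distrib]
    refine Finset.sum_congr rfl fun p₁ hp₁ => Finset.sum_congr rfl fun p₂ hp₂ => ?_
    simp only [Finset.mem_filter, Finset.mem_univ, true_and] at hp₁ hp₂
    have hc := hcov2 i₁ i₂ hlt p₁ p₂ hp₁ hp₂
    have hw1 : wext α {i₁, i₂} (lamOfPair i₁ i₂ p₁ p₂) i₁ = α i₁ p₁ := by
      simp [wext, lamOfPair_fst]
    have hw2 : wext α {i₁, i₂} (lamOfPair i₁ i₂ p₁ p₂) i₂ = α i₂ p₂ := by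
      simp [wext, lamOfPair_snd _ _ hlt.ne]
    rw [dg_mul2, hlow _ _ hc 0 (by rw [Finset.card_pair hlt.ne]; norm_num),
      hlow _ _ hc 1 (by rw [Finset.card_pair hlt.ne]; norm_num), hrp2 i₁ i₂ hlt p₁ p₂ hp₁ hp₂,
      map_sub, map_sub, map_sub, dg_W0 𝒜 D hD hD1, dg_W0 𝒜 D hD hD1, Finset.prod_pair hlt.ne,
      Finset.prod_pair hlt.ne, hw1, hw2, zero_mul, zero_mul, zero_add, zero_add, Finset.sum_mul]
    refine Finset.sum_congr rfl fun p _ => ?_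
    simp only [Algebra.smul_def, map_mul, map_add, map_one, map_zero]
    ring
  rw [Finset.sum_congr rfl (fun i _ => hone i),
    Finset.sum_congr rfl (fun i₁ _ => Finset.sum_congr rfl (fun i₂ h₂ =>
      htwo i₁ i₂ (Finset.mem_filter.mp h₂).2))]
  have hoff := sum_offdiag (fun i j => S i • (D i * D j))
  simp only [Finset.sum_add_distrib, Finset.sum_sub_distrib, Finset.sum_neg_distrib] at hoff ⊢
  rw [hoff]
  ring
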